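/- (Lemma 5.7, bias difference bound.) For all multi-indices k, l ∈ 𝒥 and all t ∈ ℝ^d: | b_t(k ∧ l) − b_t(l) | ≤ 2 B_t(k), where k ∧ l is the componentwise minimum. -/

import Mathlib

open MeasureTheory Real
open scoped ENNReal BigOperators

noncomputable section

/-- `Vec d` is `ℝ^d` (with the product structure, used for anisotropic statements). -/
abbrev Vec (d : ℕ) := Fin d → ℝ

/-- Samples of size `n` from `ℝ^d`. -/
abbrev Sample (d n : ℕ) := Fin n → Vec d

/-- The largest integer strictly smaller than `b` (for `b > 0`), i.e. `⌊b⌋` in the paper's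
anisotropic Hölder class notation. -/
def hfl (b : ℝ) : ℕ := ⌈b⌉₊ - 1

/-- One-dimensional Taylor polynomial of `f` at `y'` of degree `l`, evaluated at `y`. -/
def taylorPoly (f : ℝ → ℝ) (l : ℕ) (y' y : ℝ) : ℝ :=
  ∑ k ∈ Finset.range (l + 1), iteratedDeriv k f y' / (Nat.factorial k : ℝ) * (y - y') ^ k

/-- The slice of `f : ℝ^d → ℝ` along coordinate `i` through the point `x`. -/
def sliceFun {d : ℕ} (f : Vec d → ℝ) (i : Fin d) (x : Vec d) : ℝ → ℝ :=
  fun y => f (Function.update x i y)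

/-- Anisotropic Hölder condition with exponents `β = (β_1, …, β_d)` and constant `L`:
in each coordinate `i`, the slices admit derivatives up to order `⌊β i⌋` (the largest
integer strictly less than `β i`) and the Taylor remainder of degree `⌊β i⌋` is bounded
by `L |y - y'| ^ (β i)`, uniformly in the remaining coordinates. For `β i ≤ 1` this is
the usual coordinatewise Hölder condition. -/
def HolderAniso (d : ℕ) (β : Vec d) (L : ℝ) (f : Vec d → ℝ) : Prop :=
  ∀ i : Fin d,
    (∀ x : Vec d, ContDiff ℝ (hfl (β i)) (sliceFun f i x)) ∧
    ∀ (x : Vec d) (y y' : ℝ),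
      |sliceFun f i x y - taylorPoly (sliceFun f i x) (hfl (β i)) y' y| ≤ L * |y - y'| ^ (β i)

/-- `p` is a probability density on `ℝ^d` (w.r.t. Lebesgue measure). -/
def IsProbDensity (d : ℕ) (p : Vec d → ℝ) : Prop :=
  Measurable p ∧ (∀ x, 0 ≤ p x) ∧ ∫ x, p x = 1

/-- The class `𝒫_d(β, L)` of anisotropic Hölder-smooth probability densities. -/
def Pclass (d : ℕ) (β : Vec d) (L : ℝ) (p : Vec d → ℝ) : Prop :=
  IsProbDensity d p ∧ HolderAniso d β L p

/-- The unnormalized harmonic mean `β̄ = (∑ 1/β_i)⁻¹`. -/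
def betaBar {d : ℕ} (β : Vec d) : ℝ := (∑ i, (β i)⁻¹)⁻¹

/-- `c₁(β, L) = sup { ‖p‖_∞ : p ∈ 𝒫_d(β, L) }`. -/
def c1const (d : ℕ) (β : Vec d) (L : ℝ) : ℝ :=
  sSup {c | ∃ p x, Pclass d β L p ∧ c = p x}

/-- The measure on `ℝ^d` with Lebesgue density `p`. -/
def pdfMeasure (d : ℕ) (p : Vec d → ℝ) : Measure (Vec d) :=
  volume.withDensity fun x => ENNReal.ofReal (p x)

/-- The joint law `P^{⊗n}` of an i.i.d. sample of size `n` from the density `p`. -/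
def jointMeasure (d n : ℕ) (p : Vec d → ℝ) : Measure (Sample d n) :=
  Measure.pi fun _ => pdfMeasure d p

/-- The `p`-dependent rate `ψ^n_{x,β} = min{ x, (x/n)^{β̄/(2β̄+1)} }` (with `bb = β̄`). -/
def psiRate (n : ℕ) (bb x : ℝ) : ℝ := min x ((x / n) ^ (bb / (2 * bb + 1)))

end

noncomputable section

/-- `K` is a product kernel `K(x) = ∏ K_i(x_i)` whose factors are nonnegative, symmetric,
supported on `[-1,1]`, continuous on their support, integrate to one and are positive at `0`. -/
def IsProductKernel (d : ℕ) (K : Vec d → ℝ) : Prop :=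
  ∃ Ki : Fin d → (ℝ → ℝ),
    (∀ x, K x = ∏ i, Ki i (x i)) ∧
    ∀ i : Fin d,
      (∀ y, 0 ≤ Ki i y) ∧ (∀ y, Ki i (-y) = Ki i y) ∧
      (∀ y, y ∉ Set.Icc (-1 : ℝ) 1 → Ki i y = 0) ∧
      ContinuousOn (Ki i) (Set.Icc (-1) 1) ∧
      (∫ y, Ki i y = 1) ∧ 0 < Ki i 0

/-- The rescaled kernel `K_h(x) = (∏ h_i)⁻¹ K(x_1/h_1, …, x_d/h_d)`. -/
def scaledKernel (d : ℕ) (K : Vec d → ℝ) (h : Vec d) (x : Vec d) : ℝ :=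
  (∏ i, h i)⁻¹ * K (fun i => x i / h i)

/-- The kernel density estimator `p̂_{n,h}(t) = n⁻¹ ∑_i K_h(t - X_i)`. -/
def kde (d n : ℕ) (K : Vec d → ℝ) (h : Vec d) (X : Sample d n) (t : Vec d) : ℝ :=
  (n : ℝ)⁻¹ * ∑ i, scaledKernel d K h (fun j => t j - X i j)

/-- `‖K‖_sup`. -/
def KsupNorm (d : ℕ) (K : Vec d → ℝ) : ℝ := ⨆ x, |K x|

/-- `‖K‖₂² = ∫ K² dλ^d`. -/
def K2sq (d : ℕ) (K : Vec d → ℝ) : ℝ := ∫ x, (K x) ^ 2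

/-- The exact variance proxy `σ_t²(h) = n⁻¹ ((K_h)² ∗ p)(t)`. -/
def sigmaSq (d n : ℕ) (K : Vec d → ℝ) (p : Vec d → ℝ) (h : Vec d) (t : Vec d) : ℝ :=
  (n : ℝ)⁻¹ * ∫ y, (scaledKernel d K h (fun i => t i - y i)) ^ 2 * p y

/-- The truncation level `log²n / (n² ∏ h_i²)`. -/
def truncLevel (d n : ℕ) (h : Vec d) : ℝ :=
  (Real.log n) ^ 2 / ((n : ℝ) ^ 2 * (∏ i, h i) ^ 2)

/-- `σ²_{t,trunc}(h) = max{ log²n/(n² ∏ h_i²), σ_t²(h) }`. -/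
def sigmaSqTrunc (d n : ℕ) (K : Vec d → ℝ) (p : Vec d → ℝ) (h : Vec d) (t : Vec d) : ℝ :=
  max (truncLevel d n h) (sigmaSq d n K p h t)

/-- The empirical variance `σ̃_t²(h) = (n² ∏ h_i²)⁻¹ ∑_i K²((t - X_i)/h)`. -/
def sigmaTildeSq (d n : ℕ) (K : Vec d → ℝ) (h : Vec d) (X : Sample d n) (t : Vec d) : ℝ :=
  ((n : ℝ) ^ 2 * (∏ i, h i) ^ 2)⁻¹ * ∑ i, (K (fun j => (t j - X i j) / h j)) ^ 2

/-- `σ̃²_{t,trunc}(h) = max{ log²n/(n² ∏ h_i²), σ̃_t²(h) }`. -/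
def sigmaTildeSqTrunc (d n : ℕ) (K : Vec d → ℝ) (h : Vec d) (X : Sample d n) (t : Vec d) : ℝ :=
  max (truncLevel d n h) (sigmaTildeSq d n K h X t)

/-- Membership of the multi-index `j` in the dyadic grid `𝒥`, i.e. `∑ j_i ≤ ⌊log₂(n/log²n)⌋`. -/
def gridOK (d n : ℕ) (j : Fin d → ℕ) : Prop :=
  ((∑ i, j i : ℕ) : ℝ) ≤ Real.logb 2 ((n : ℝ) / (Real.log n) ^ 2)

/-- The bandwidth `(2^{-j_1}, …, 2^{-j_d})` associated with a multi-index `j`. -/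
def bwOf (d : ℕ) (j : Fin d → ℕ) : Vec d := fun i => (2 : ℝ) ^ (-(j i : ℝ))

/-- The bias upper bound `B_t(h) = L ∑_i c_{9,i}(β) h_i^{β_i}`,
with `c_{9,i}(β) = ∫ |x_i|^{β_i} |K(x)| dλ^d(x)`. -/
def biasBound (d : ℕ) (K : Vec d → ℝ) (β : Vec d) (L : ℝ) (h : Vec d) : ℝ :=
  L * ∑ i, (∫ x : Vec d, |x i| ^ (β i) * |K x|) * h i ^ (β i)

/-- The bias `b_t(h) = p(t) - (K_h ∗ p)(t)`. -/
def biasAt (d : ℕ) (K : Vec d → ℝ) (p : Vec d → ℝ) (h : Vec d) (t : Vec d) : ℝ :=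
  p t - ∫ y, scaledKernel d K h (fun i => t i - y i) * p y

end

/-!
Substituting `y = t - h * x` writes the bias as `p t - ∫ K x * p (t - h * x)`, which makes sense
even when some bandwidths vanish. Since `K` is even in every coordinate, switching off the single
bandwidth `h i` changes this integral by half the integral of `K` against a second difference of
`p` in direction `i`. The linear Taylor term cancels there, so for `β i ≤ 2` the change is at most
`L * c₉ᵢ * |h i| ^ β i`. Passing from `h` to `η ⊔ h` one coordinate at a time, only the coordinates
with `h i ≤ η i` contribute, and in each of them both bandwidths are at most `η i`: going through
the bandwidth `0` costs twice the corresponding term of the bias bound at `η`.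
-/

section General

lemma dist_le_sum_of_dist_update_le {ι E : Type*} {α : ι → Type*} [Fintype ι] [DecidableEq ι]
    [PseudoMetricSpace E] (F : (∀ i, α i) → E) (x y : ∀ i, α i) (w : ι → ℝ)
    (hw : ∀ i z, dist (F (Function.update z i (x i))) (F (Function.update z i (y i))) ≤ w i) :
    dist (F x) (F y) ≤ ∑ i, w i := by
  suffices H : ∀ s : Finset ι, dist (F (s.piecewise x y)) (F y) ≤ ∑ i ∈ s, w i by
    simpa only [Finset.piecewise_univ] using H Finset.univ
  intro s
  induction s using Finset.induction_on with
  | empty => simp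
  | insert i s hi ih =>
    have hself : Function.update (s.piecewise x y) i (y i) = s.piecewise x y := by
      rw [← Finset.piecewise_eq_of_notMem s x y hi, Function.update_eq_self]
    have hstep := hw i (s.piecewise x y)
    rw [hself, ← Finset.piecewise_insert] at hstep
    rw [Finset.sum_insert hi]
    exact (dist_triangle _ _ _).trans (add_le_add hstep ih)

lemma integral_comp_pi_mul_left {ι E : Type*} [Fintype ι] [NormedAddCommGroup E]
    [NormedSpace ℝ E] {h : ι → ℝ} (hh : ∀ i, h i ≠ 0) (g : (ι → ℝ) → E) :
    ∫ x, g (h * x) = |∏ i, h i|⁻¹ • ∫ x, g x := by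
  classical
  have hprod : ∏ i, h i ≠ 0 := Finset.prod_ne_zero_iff.2 fun i _ => hh i
  let e : (ι → ℝ) ≃ₜ (ι → ℝ) := Homeomorph.piCongrRight fun i => Homeomorph.mulLeft₀ (h i) (hh i)
  have hlin : ⇑(Matrix.toLin' (Matrix.diagonal h)) = ⇑e := by
    funext x i
    exact Matrix.mulVec_diagonal h x i
  have hmap := Real.smul_map_diagonal_volume_pi (D := h) (by rwa [Matrix.det_diagonal])
  rw [Matrix.det_diagonal, hlin] at hmap
  have hscale : ∫ x, g x = |∏ i, h i| • ∫ x, g (h * x) := by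
    conv_lhs => rw [← hmap, integral_smul_measure, e.measurableEmbedding.integral_map,
      ENNReal.toReal_ofReal (abs_nonneg _)]
    rfl
  rw [hscale, inv_smul_smul₀ (abs_ne_zero.2 hprod)]

lemma integrable_mul_of_forall_mem_tsupport_abs_le {X : Type*} [TopologicalSpace X]
    [MeasurableSpace X] {μ : Measure X} {f g : X → ℝ} (hf : Integrable f μ)
    (hg : AEStronglyMeasurable g μ) {C : ℝ} (hC : ∀ x ∈ tsupport f, |g x| ≤ C) :
    Integrable (fun x => f x * g x) μ := by
  refine (hf.norm.mul_const C).mono' (hf.aestronglyMeasurable.mul hg) (.of_forall fun x => ?_)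
  rw [norm_mul]
  by_cases hx : f x = 0
  · simp [hx]
  · exact mul_le_mul_of_nonneg_left (hC x (subset_tsupport f hx)) (norm_nonneg _)

end General

section Holder

variable {d : ℕ} {β : Vec d} {L : ℝ} {p : Vec d → ℝ}

lemma HolderAniso.const_nonneg (hp : HolderAniso d β L p) (i : Fin d) : 0 ≤ L := by
  simpa using (abs_nonneg _).trans ((hp i).2 0 1 0)

lemma HolderAniso.exists_affine_approx (hp : HolderAniso d β L p) {i : Fin d} (hβ : β i ≤ 2)
    (x : Vec d) :
    ∃ c : ℝ, ∀ s, |p (x + Pi.single i s) - (p x + c * s)| ≤ L * |s| ^ β i := by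
  have hdegree : hfl (β i) ≤ 1 := by
    have : ⌈β i⌉₊ ≤ 2 := Nat.ceil_le.2 (by exact_mod_cast hβ)
    unfold hfl
    omega
  have hslice : ∀ s, sliceFun p i x (x i + s) = p (x + Pi.single i s) := fun s => by
    have : Function.update x i (x i + s) = x + Pi.single i s := by
      ext j
      rcases eq_or_ne j i with rfl | hj <;> simp [*]
    rw [sliceFun, this]
  have hbase : sliceFun p i x (x i) = p x := by rw [sliceFun, Function.update_eq_self]
  have htaylor := fun s => (hp i).2 x (x i + s) (x i)
  rcases Nat.le_one_iff_eq_zero_or_eq_one.1 hdegree with h0 | h1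
  · refine ⟨0, fun s => ?_⟩
    simpa [h0, taylorPoly, hslice, hbase] using htaylor s
  · refine ⟨deriv (sliceFun p i x) (x i), fun s => ?_⟩
    simpa [h1, taylorPoly, hslice, hbase, Finset.sum_range_succ] using htaylor s

lemma HolderAniso.abs_second_difference_le (hp : HolderAniso d β L p) {i : Fin d} (hβ : β i ≤ 2)
    (x : Vec d) (s : ℝ) :
    |p (x + Pi.single i s) + p (x - Pi.single i s) - 2 * p x| ≤ 2 * (L * |s| ^ β i) := by
  obtain ⟨c, hc⟩ := hp.exists_affine_approx hβ x
  have hplus := abs_le.1 (hc s)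
  have hminus := abs_le.1 (hc (-s))
  rw [Pi.single_neg, ← sub_eq_add_neg, abs_neg] at hminus
  exact abs_le.2 ⟨by linarith, by linarith⟩

lemma HolderAniso.apply_add_single_le (hp : HolderAniso d β L p) (hp0 : ∀ x, 0 ≤ p x)
    {i : Fin d} (hβ : β i ∈ Set.Ioc 0 2) (x : Vec d) {s R : ℝ} (hs : |s| ≤ R) :
    p (x + Pi.single i s) ≤ (1 + R) * p x + L * (R + R ^ β i) := by
  obtain ⟨c, hc⟩ := hp.exists_affine_approx hβ.2 x
  -- A steeper slope would make `p` negative at `x + Pi.single i 1` or at `x - Pi.single i 1`.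
  have hslope : |c| ≤ p x + L := by
    have hplus := (abs_le.1 (hc 1)).2
    have hminus := (abs_le.1 (hc (-1))).2
    simp only [abs_neg, abs_one, Real.one_rpow] at hplus hminus
    exact abs_le.2 ⟨by linarith [hp0 (x + Pi.single i 1)],
      by linarith [hp0 (x + Pi.single i (-1))]⟩
  have hlinear : c * s ≤ (p x + L) * R :=
    calc c * s ≤ |c| * |s| := (le_abs_self _).trans (abs_mul c s).le
      _ ≤ (p x + L) * R := by
        have := hp.const_nonneg i
        have := hp0 x
        gcongr
  have hremainder : L * |s| ^ β i ≤ L * R ^ β i :=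
    mul_le_mul_of_nonneg_left (Real.rpow_le_rpow (abs_nonneg s) hs hβ.1.le) (hp.const_nonneg i)
  linarith [(abs_le.1 (hc s)).2]

lemma HolderAniso.bddAbove_image (hp : HolderAniso d β L p) (hp0 : ∀ x, 0 ≤ p x)
    (hβ : ∀ i, β i ∈ Set.Ioc 0 2) {s : Set (Vec d)} (hs : Bornology.IsBounded s) :
    BddAbove (p '' s) := by
  obtain ⟨R, hR⟩ := hs.exists_norm_le
  suffices H : ∀ u : Finset (Fin d), ∃ C, ∀ x ∈ s, p (∑ i ∈ u, Pi.single i (x i)) ≤ C by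
    obtain ⟨C, hC⟩ := H Finset.univ
    refine ⟨C, Set.forall_mem_image.2 fun x hx => ?_⟩
    simpa only [Finset.univ_sum_single] using hC x hx
  intro u
  induction u using Finset.induction_on with
  | empty => exact ⟨p 0, fun x _ => by simp⟩
  | insert i u hi ih =>
    obtain ⟨C, hC⟩ := ih
    refine ⟨(1 + R) * C + L * (R + R ^ β i), fun x hx => ?_⟩
    have hxi : |x i| ≤ R := (norm_le_pi_norm x i).trans (hR x hx)
    have hR1 : 0 ≤ 1 + R := by linarith [abs_nonneg (x i)]
    rw [Finset.sum_insert hi, add_comm]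
    refine (hp.apply_add_single_le hp0 (hβ i) _ hxi).trans ?_
    gcongr
    exact hC x hx

end Holder

section KernelSmooth

variable {d : ℕ} {K p : Vec d → ℝ} {β : Vec d} {L : ℝ}

/-- Evenness in each coordinate separately; multiplication by `Pi.mulSingle i (-1)` flips the sign
of the `i`-th coordinate. -/
def CoordEven (K : Vec d → ℝ) : Prop := ∀ i x, K (Pi.mulSingle i (-1) * x) = K x

/-- The absolute moment of order `b` of `K` in coordinate `i`, so that the paper's `c_{9,i}(β)` is
`absMoment K i (β i)`. -/
noncomputable def absMoment (K : Vec d → ℝ) (i : Fin d) (b : ℝ) : ℝ := ∫ x, |x i| ^ b * |K x|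

/-- The smoothed function `(K_h ∗ p)(t)` after the substitution `y = t - h * x`. Unlike the rescaled
kernel `K_h`, this is meaningful for vanishing bandwidths. -/
noncomputable def kernelSmooth (K p : Vec d → ℝ) (h t : Vec d) : ℝ := ∫ x, K x * p (t - h * x)

lemma biasAt_eq_sub_kernelSmooth (K p : Vec d → ℝ) {h : Vec d} (hh : ∀ i, 0 < h i) (t : Vec d) :
    biasAt d K p h t = p t - kernelSmooth K p h t := by
  have hprod : 0 < ∏ i, h i := Finset.prod_pos fun i _ => hh i
  have hdiv : ∀ x : Vec d, (fun i => (h * x) i / h i) = x := fun x =>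
    funext fun i => mul_div_cancel_left₀ _ (hh i).ne'
  have hconv : ∫ y, scaledKernel d K h (fun i => t i - y i) * p y =
      ∫ z, scaledKernel d K h z * p (t - z) := by
    rw [← integral_sub_left_eq_self _ volume t]
    simp only [Pi.sub_apply, sub_sub_cancel]
  have hscale := integral_comp_pi_mul_left (fun i => (hh i).ne')
    fun z => scaledKernel d K h z * p (t - z)
  simp only [scaledKernel, hdiv, mul_assoc, integral_const_mul, abs_of_pos hprod, smul_eq_mul]
    at hscale
  rw [biasAt, hconv, kernelSmooth]
  simp only [scaledKernel, mul_assoc, integral_const_mul]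
  rw [mul_left_cancel₀ (inv_ne_zero hprod.ne') hscale]

lemma CoordEven.kernelSmooth_mulSingle_neg_one_mul (hK : CoordEven K) (p : Vec d → ℝ) (i : Fin d)
    (h t : Vec d) :
    kernelSmooth K p (Pi.mulSingle i (-1) * h) t = kernelSmooth K p h t := by
  have hne : ∀ j, (Pi.mulSingle i (-1) : Vec d) j ≠ 0 := fun j => by
    rw [Pi.mulSingle_apply]
    split_ifs <;> norm_num
  have hflip := integral_comp_pi_mul_left hne fun x => K x * p (t - h * x)
  simpa [hK i, kernelSmooth, mul_left_comm, mul_assoc] using hflip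

lemma absMoment_nonneg (K : Vec d → ℝ) (i : Fin d) (b : ℝ) : 0 ≤ absMoment K i b :=
  integral_nonneg fun x => by positivity

lemma integrable_abs_rpow_mul_abs (hK : Integrable K) (hKc : HasCompactSupport K) (i : Fin d)
    {b : ℝ} (hb : 0 ≤ b) : Integrable fun x : Vec d => |x i| ^ b * |K x| := by
  have hcont : Continuous fun x : Vec d => |x i| ^ b :=
    (continuous_apply i).abs.rpow_const fun _ => Or.inr hb
  obtain ⟨C, hC⟩ := hKc.isCompact.exists_bound_of_continuousOn hcont.continuousOn
  have h := (integrable_mul_of_forall_mem_tsupport_abs_le hK hcont.aestronglyMeasurable hC).abs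
  refine h.congr (.of_forall fun x => ?_)
  dsimp only
  rw [abs_mul, abs_of_nonneg (by positivity : 0 ≤ |x i| ^ b), mul_comm]

lemma HolderAniso.integrable_mul_apply_sub (hp : HolderAniso d β L p) (hpm : Measurable p)
    (hp0 : ∀ x, 0 ≤ p x) (hβ : ∀ i, β i ∈ Set.Ioc 0 2) (hK : Integrable K)
    (hKc : HasCompactSupport K) (h t : Vec d) :
    Integrable fun x => K x * p (t - h * x) := by
  have hcont : Continuous fun x : Vec d => t - h * x := by fun_prop
  obtain ⟨C, hC⟩ := hp.bddAbove_image hp0 hβ (hKc.isCompact.image hcont).isBounded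
  refine integrable_mul_of_forall_mem_tsupport_abs_le (C := C) hK
    (hpm.comp hcont.measurable).aestronglyMeasurable fun x hx => ?_
  rw [abs_of_nonneg (hp0 _)]
  exact hC ⟨_, ⟨x, hx, rfl⟩, rfl⟩

lemma CoordEven.two_mul_kernelSmooth_sub_update_zero (hK : CoordEven K) {t : Vec d}
    (hint : ∀ h, Integrable fun x => K x * p (t - h * x)) (h : Vec d) (i : Fin d) :
    2 * (kernelSmooth K p h t - kernelSmooth K p (Function.update h i 0) t) =
      ∫ x, K x * (p (t - Function.update h i 0 * x + Pi.single i (h i * x i)) +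
        p (t - Function.update h i 0 * x - Pi.single i (h i * x i)) -
        2 * p (t - Function.update h i 0 * x)) := by
  set h₀ := Function.update h i 0
  have hminus : ∀ x : Vec d, t - h₀ * x - Pi.single i (h i * x i) = t - h * x := fun x => by
    ext j
    rcases eq_or_ne j i with rfl | hj <;> simp [h₀, *]
  have hplus : ∀ x : Vec d, t - h₀ * x + Pi.single i (h i * x i) =
      t - Pi.mulSingle i (-1) * h * x := fun x => by
    ext j
    rcases eq_or_ne j i with rfl | hj <;> simp [h₀, *]
  have hflip := hK.kernelSmooth_mulSingle_neg_one_mul p i h t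
  simp only [hminus, hplus, mul_sub, mul_add, mul_left_comm _ (2 : ℝ)]
  rw [integral_sub ((hint _).fun_add (hint _)) ((hint _).const_mul 2),
    integral_add (hint _) (hint _), integral_const_mul]
  simp only [kernelSmooth] at hflip ⊢
  linarith

lemma HolderAniso.abs_kernelSmooth_sub_update_zero_le (hp : HolderAniso d β L p)
    (hpm : Measurable p) (hp0 : ∀ x, 0 ≤ p x) (hβ : ∀ i, β i ∈ Set.Ioc 0 2) (hK : Integrable K)
    (hKc : HasCompactSupport K) (hKe : CoordEven K) (h t : Vec d) (i : Fin d) :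
    |kernelSmooth K p h t - kernelSmooth K p (Function.update h i 0) t| ≤
      L * (absMoment K i (β i) * |h i| ^ β i) := by
  have hsecond := hKe.two_mul_kernelSmooth_sub_update_zero
    (hp.integrable_mul_apply_sub hpm hp0 hβ hK hKc · t) h i
  have hbound : |2 * (kernelSmooth K p h t - kernelSmooth K p (Function.update h i 0) t)| ≤
      2 * L * |h i| ^ β i * absMoment K i (β i) := by
    rw [hsecond, absMoment, ← integral_const_mul, ← Real.norm_eq_abs (∫ _, _)]
    refine norm_integral_le_of_norm_le
      ((integrable_abs_rpow_mul_abs hK hKc i (hβ i).1.le).const_mul _) (.of_forall fun x => ?_)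
    have hdiff := hp.abs_second_difference_le (hβ i).2 (t - Function.update h i 0 * x) (h i * x i)
    rw [abs_mul (h i), Real.mul_rpow (abs_nonneg _) (abs_nonneg _)] at hdiff
    rw [Real.norm_eq_abs, abs_mul]
    exact (mul_le_mul_of_nonneg_left hdiff (abs_nonneg (K x))).trans_eq (by ring)
  rw [abs_mul, abs_two] at hbound
  linarith

lemma HolderAniso.abs_kernelSmooth_update_sub_update_le (hp : HolderAniso d β L p)
    (hpm : Measurable p) (hp0 : ∀ x, 0 ≤ p x) (hβ : ∀ i, β i ∈ Set.Ioc 0 2) (hK : Integrable K)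
    (hKc : HasCompactSupport K) (hKe : CoordEven K) (h t : Vec d) (i : Fin d) {a b M : ℝ}
    (ha : |a| ≤ M) (hb : |b| ≤ M) :
    |kernelSmooth K p (Function.update h i a) t - kernelSmooth K p (Function.update h i b) t| ≤
      2 * (L * (absMoment K i (β i) * M ^ β i)) := by
  set S := fun c => kernelSmooth K p (Function.update h i c) t
  have hzero : ∀ c, |c| ≤ M → |S c - S 0| ≤ L * (absMoment K i (β i) * M ^ β i) := fun c hc => by
    have h0 := hp.abs_kernelSmooth_sub_update_zero_le hpm hp0 hβ hK hKc hKe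
      (Function.update h i c) t i
    rw [Function.update_idem, Function.update_self] at h0
    refine h0.trans ?_
    have := hp.const_nonneg i
    have := absMoment_nonneg K i (β i)
    have := (hβ i).1.le
    gcongr
  calc |S a - S b| ≤ |S a - S 0| + |S 0 - S b| := abs_sub_le _ _ _
    _ ≤ _ := by linarith [hzero a ha, hzero b hb, abs_sub_comm (S 0) (S b)]

lemma HolderAniso.abs_kernelSmooth_sup_sub_le (hp : HolderAniso d β L p)
    (hpm : Measurable p) (hp0 : ∀ x, 0 ≤ p x) (hβ : ∀ i, β i ∈ Set.Ioc 0 2) (hK : Integrable K)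
    (hKc : HasCompactSupport K) (hKe : CoordEven K) {h η : Vec d} (hh : 0 ≤ h) (hη : 0 ≤ η)
    (t : Vec d) :
    |kernelSmooth K p (η ⊔ h) t - kernelSmooth K p h t| ≤ 2 * biasBound d K β L η := by
  rw [biasBound, Finset.mul_sum, Finset.mul_sum]
  refine dist_le_sum_of_dist_update_le (kernelSmooth K p · t) _ _ _ fun i z => ?_
  rcases le_total (η i) (h i) with hle | hle
  · rw [Pi.sup_apply, sup_of_le_right hle, dist_self]
    exact mul_nonneg zero_le_two (mul_nonneg (hp.const_nonneg i)
      (mul_nonneg (absMoment_nonneg K i (β i)) (Real.rpow_nonneg (hη i) (β i))))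
  · rw [Pi.sup_apply, sup_of_le_left hle]
    exact hp.abs_kernelSmooth_update_sub_update_le hpm hp0 hβ hK hKc hKe z t i
      (abs_of_nonneg (hη i)).le ((abs_of_nonneg (hh i)).trans_le hle)

theorem statement15_general (hK : Integrable K) (hKc : HasCompactSupport K) (hKe : CoordEven K)
    (hβ : ∀ i, β i ∈ Set.Ioc 0 2) (hpm : Measurable p) (hp0 : ∀ x, 0 ≤ p x)
    (hp : HolderAniso d β L p) {h η : Vec d} (hh : ∀ i, 0 < h i) (hη : 0 ≤ η) (t : Vec d) :
    |biasAt d K p (η ⊔ h) t - biasAt d K p h t| ≤ 2 * biasBound d K β L η := by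
  have hsup : ∀ i, 0 < (η ⊔ h) i := fun i => lt_sup_of_lt_right (hh i)
  rw [biasAt_eq_sub_kernelSmooth K p hsup, biasAt_eq_sub_kernelSmooth K p hh,
    sub_sub_sub_cancel_left, abs_sub_comm]
  exact hp.abs_kernelSmooth_sup_sub_le hpm hp0 hβ hK hKc hKe (fun i => (hh i).le) hη t

end KernelSmooth

section ProductKernel

variable {d : ℕ} {K : Vec d → ℝ}

lemma IsProductKernel.integrable (hK : IsProductKernel d K) : Integrable K := by
  obtain ⟨Ki, hprod, hKi⟩ := hK
  obtain rfl : K = fun x => ∏ i, Ki i (x i) := funext hprod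
  refine Integrable.fintype_prod fun i => Integrable.of_integral_ne_zero ?_
  obtain ⟨-, -, -, -, hone, -⟩ := hKi i
  exact hone ▸ one_ne_zero

lemma IsProductKernel.hasCompactSupport (hK : IsProductKernel d K) : HasCompactSupport K := by
  obtain ⟨Ki, hprod, hKi⟩ := hK
  refine HasCompactSupport.intro (isCompact_univ_pi fun _ => isCompact_Icc (a := -1) (b := 1))
    fun x hx => ?_
  obtain ⟨i, hi⟩ : ∃ i, x i ∉ Set.Icc (-1) 1 := by simpa only [Set.mem_univ_pi, not_forall] using hx
  obtain ⟨-, -, hsupp, -⟩ := hKi i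
  rw [hprod]
  exact Finset.prod_eq_zero (Finset.mem_univ i) (hsupp _ hi)

lemma IsProductKernel.coordEven (hK : IsProductKernel d K) : CoordEven K := by
  obtain ⟨Ki, hprod, hKi⟩ := hK
  intro i x
  rw [hprod, hprod]
  refine Finset.prod_congr rfl fun j _ => ?_
  obtain ⟨-, heven, -⟩ := hKi j
  rcases eq_or_ne j i with rfl | hj
  · simp [heven]
  · simp [hj]

end ProductKernel

lemma bwOf_pos {d : ℕ} (j : Fin d → ℕ) (i : Fin d) : 0 < bwOf d j i :=
  Real.rpow_pos_of_pos two_pos _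

lemma bwOf_min {d : ℕ} (k l : Fin d → ℕ) :
    bwOf d (fun i => min (k i) (l i)) = bwOf d k ⊔ bwOf d l := by
  have hanti : Antitone fun m : ℕ => (2 : ℝ) ^ (-(m : ℝ)) := fun a b hab =>
    Real.rpow_le_rpow_of_exponent_le one_le_two (neg_le_neg (Nat.cast_le.2 hab))
  funext i
  exact hanti.map_min

/-- Lemma 5.7, bias difference bound.
For all multi-indices `k, l ∈ 𝒥` and all `t`:
`|b_t(k ∧ l) - b_t(l)| ≤ 2 B_t(k)`, where `k ∧ l` is the componentwise minimum. -/
theorem statement15 (d : ℕ) (hd : 1 ≤ d) (K : Vec d → ℝ) (hK : IsProductKernel d K)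
    (β : Vec d) (hβ : ∀ i, 0 < β i ∧ β i ≤ 2) (L : ℝ) (hL : 0 < L)
    (p : Vec d → ℝ) (hp : Pclass d β L p) (n : ℕ) (hn : 2 ≤ n)
    (k l : Fin d → ℕ) (hk : gridOK d n k) (hl : gridOK d n l) (t : Vec d) :
    |biasAt d K p (bwOf d (fun i => min (k i) (l i))) t - biasAt d K p (bwOf d l) t| ≤
      2 * biasBound d K β L (bwOf d k) := by
  rw [bwOf_min]
  exact statement15_general hK.integrable hK.hasCompactSupport hK.coordEven hβ hp.1.1 hp.1.2.1 hp.2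
    (bwOf_pos l) (fun i => (bwOf_pos k i).le) t
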